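/- Fix an integer q ≥ 2 and let P(n,m) be the probability that a uniformly random pair (f, c), where f : Fin m → Fin n × Fin n is a sequence of m ordered pairs of vertices and c : Fin n → Fin q is a coloring, is properly colored, i.e. P(n,m) = #{(f,c) : ∀ i ∈ Fin m, c (f i).1 ≠ c (f i).2} / (n^{2m} · qⁿ). Then for every sequence m : ℕ → ℕ for which there exist 0 < a ≤ b < 1/2 with a ≤ m(n)/n ≤ b for all large n, the ratio P(n, m(n)) / [ (1 − 1/q)^m · (1 + (2m/n)/(q−1))^{−(q−1)/2} ] tends to 1 as n → ∞ (where m = m(n)). -/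

import Mathlib

namespace Inhomog

noncomputable section

/-- Probability that a uniformly random pair of a sequence of `m` ordered pairs of
vertices (a random multigraph) and a `q`-coloring of the `n` vertices is properly
colored. -/
def PProper (q n m : ℕ) : ℝ :=
  (Nat.card {p : (Fin m → Fin n × Fin n) × (Fin n → Fin q) //
      ∀ i : Fin m, p.2 (p.1 i).1 ≠ p.2 (p.1 i).2} : ℝ) /
    ((n : ℝ) ^ (2 * m) * (q : ℝ) ^ n)

section Helpers
open MeasureTheory ProbabilityTheory Filter Topology


lemma norm_pow_sub_pow_le' {a b : ℂ} (ha : ‖a‖ ≤ 1) (hb : ‖b‖ ≤ 1) (n : ℕ) :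
    ‖a ^ n - b ^ n‖ ≤ n * ‖a - b‖ := by
  induction n with
  | zero => simp
  | succ n ih =>
    have : a ^ (n+1) - b ^ (n+1) = a * (a ^ n - b ^ n) + (a - b) * b ^ n := by ring
    rw [this]
    refine (norm_add_le _ _).trans ?_
    rw [norm_mul, norm_mul, norm_pow]
    have h1 : ‖a‖ * ‖a ^ n - b ^ n‖ ≤ 1 * (n * ‖a - b‖) := by gcongr
    have h2 : ‖a - b‖ * ‖b‖ ^ n ≤ ‖a - b‖ * 1 := by
      gcongr; exact pow_le_one₀ (norm_nonneg _) hb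
    push_cast; linarith

lemma exp_third {x : ℂ} (hx : ‖x‖ ≤ 1) : ‖Complex.exp x - (1 + x + x ^ 2 / 2)‖ ≤ ‖x‖ ^ 3 := by
  have h := Complex.exp_bound hx (n := 3) (by norm_num)
  simp [Finset.sum_range_succ, Nat.factorial] at h
  refine h.trans ?_
  have : 0 ≤ ‖x‖ ^ 3 := by positivity
  linarith

lemma elem_bound {y : ℝ} (h0 : 0 ≤ y) (h1 : y ≤ 1) {m : ℕ} (hm : 0 < m) :
    |(1 - y) ^ m - Real.exp (-(m * y))| ≤ 6 / m := by
  have hb : 0 ≤ 1 - y := by linarith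
  have hab : 1 - y ≤ Real.exp (-y) := by linarith [Real.add_one_le_exp (-y)]
  have hE : Real.exp (-(m * y)) = Real.exp (-y) ^ m := by
    rw [← Real.exp_nat_mul]; congr 1; ring
  have hd : Real.exp (-y) - (1 - y) ≤ y ^ 2 := by
    have := Real.norm_exp_sub_one_sub_id_le (x := -y) (by rw [norm_neg, Real.norm_of_nonneg h0]; exact h1)
    rw [Real.norm_eq_abs, norm_neg, Real.norm_of_nonneg h0] at this
    linarith [le_abs_self (Real.exp (-y) - 1 - -y)]
  have key : ∀ k : ℕ, Real.exp (-y) ^ (k+1) - (1 - y) ^ (k+1) ≤ (k+1) * y^2 * Real.exp (-y) ^ k := by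
    intro k
    induction k with
    | zero => simpa using hd
    | succ k ih =>
      have e : Real.exp (-y) ^ (k+1+1) - (1 - y) ^ (k+1+1) =
        Real.exp (-y) * (Real.exp (-y) ^ (k+1) - (1 - y) ^ (k+1)) +
          (Real.exp (-y) - (1-y)) * (1-y)^(k+1) := by ring
      rw [e]
      have p1 := mul_le_mul_of_nonneg_left ih (Real.exp_pos (-y)).le
      have p2 : (Real.exp (-y) - (1-y)) * (1-y)^(k+1) ≤ y^2 * Real.exp (-y) ^ (k+1) := by
        gcongr
      have e2 : Real.exp (-y) * ((k+1) * y^2 * Real.exp (-y) ^ k) = (k+1) * y^2 * Real.exp (-y) ^ (k+1) := by ring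
      push_cast
      linarith
  obtain ⟨k, rfl⟩ : ∃ k, m = k + 1 := ⟨m - 1, by omega⟩
  have hmono : (1 - y) ^ (k+1) ≤ Real.exp (-y) ^ (k+1) := by gcongr
  rw [hE, abs_sub_comm, abs_of_nonneg (by linarith)]
  refine (key k).trans ?_
  rw [le_div_iff₀ (by positivity)]
  have hx : 0 ≤ (k+1) * y := by positivity
  have q1 := Real.quadratic_le_exp_of_nonneg hx
  have q2 : ((k+1) * y)^2 ≤ 2 * Real.exp ((k+1) * y) := by nlinarith
  have e3 : Real.exp (-y) ^ k = Real.exp y * Real.exp (-((k+1)*y)) := by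
    rw [← Real.exp_nat_mul, ← Real.exp_add]; congr 1; ring
  have q3 : ((k+1) * y)^2 * Real.exp (-((k+1)*y)) ≤ 2 := by
    have := mul_le_mul_of_nonneg_right q2 (Real.exp_pos (-((k+1)*y))).le
    rwa [mul_assoc, ← Real.exp_add, add_neg_cancel, Real.exp_zero, mul_one] at this
  have q4 : Real.exp y ≤ 3 := by
    have := Real.exp_le_exp.2 h1
    linarith [Real.exp_one_lt_d9]
  push_cast
  calc _ = Real.exp y * (((k+1) * y)^2 * Real.exp (-((k+1)*y))) := by rw [e3]; ring
    _ ≤ 3 * 2 := by gcongr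
    _ = 6 := by norm_num

lemma pointwise {q : ℕ} (hq : 0 < q) (d : Fin q → ℝ) (hd : ∑ j, d j = 0) (t : ℕ → ℝ) (T : ℝ)
    (ht : ∀ᶠ n in atTop, 0 ≤ t n ∧ t n ≤ T) :
    Tendsto (fun n : ℕ => ((1 / (q:ℂ)) * ∑ j, Complex.exp ((Real.sqrt (2 * t n * q / n) * d j : ℝ) * Complex.I)) ^ n
      - (Real.exp (-(t n * ∑ j, d j ^ 2)) : ℂ)) atTop (𝓝 0) := by
  have hq' : (0:ℝ) < q := by exact_mod_cast hq
  have hqc : (q:ℂ) ≠ 0 := by exact_mod_cast hq.ne'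
  set A : ℝ := (1 / q) * ∑ j, |d j| ^ 3 with hA
  set B : ℝ := (∑ j, d j ^ 2) / (2 * q) with hB
  have hB0 : 0 ≤ B := by positivity
  set u : ℕ → ℝ := fun n => Real.sqrt (2 * t n * q / n) with hu
  have hu0 : Tendsto u atTop (𝓝 0) := by
    have : Tendsto (fun n : ℕ => Real.sqrt (2 * T * q / n)) atTop (𝓝 0) := by
      have := (tendsto_const_div_atTop_nhds_zero_nat (2 * T * q)).sqrt
      simpa using this
    refine squeeze_zero' (Eventually.of_forall fun n => Real.sqrt_nonneg _) ?_ this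
    filter_upwards [ht] with n hn
    apply Real.sqrt_le_sqrt
    gcongr
    exact hn.2
  have hlim : Tendsto (fun n => (2 * T * q) * (u n * A + u n ^ 2 * B ^ 2)) atTop (𝓝 0) := by
    have := ((hu0.mul_const A).add ((hu0.pow 2).mul_const (B^2))).const_mul (2 * T * q)
    simpa using this
  have hsmall : ∀ᶠ n in atTop, ∀ j, |u n * d j| ≤ 1 := by
    rw [eventually_all]
    intro j
    have : Tendsto (fun n => |u n * d j|) atTop (𝓝 0) := by
      simpa using (hu0.mul_const (d j)).abs
    exact (this.eventually (gt_mem_nhds one_pos)).mono fun n h => le_of_lt h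
  have hsB : ∀ᶠ n in atTop, u n ^ 2 * B ≤ 1 := by
    have : Tendsto (fun n => u n ^ 2 * B) atTop (𝓝 0) := by
      simpa using ((hu0.pow 2).mul_const B)
    exact (this.eventually (gt_mem_nhds one_pos)).mono fun n h => le_of_lt h
  refine squeeze_zero_norm' ?_ hlim
  filter_upwards [ht, hsmall, hsB, eventually_gt_atTop 0] with n hn hs hs2 hn0
  have hnr : (0:ℝ) < n := by exact_mod_cast hn0
  have hun : 0 ≤ u n := Real.sqrt_nonneg _
  have hT : 0 ≤ T := hn.1.trans hn.2
  have hu2 : n * u n ^ 2 = 2 * t n * q := by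
    rw [hu]; dsimp only
    rw [Real.sq_sqrt (by have := hn.1; positivity)]
    field_simp
  have hE : (Real.exp (-(t n * ∑ j, d j ^ 2)) : ℂ) = ((Real.exp (-(u n ^ 2 * B)) : ℝ) : ℂ) ^ n := by
    rw [← Complex.ofReal_pow, ← Real.exp_nat_mul]
    congr 2
    have : (n:ℝ) * -(u n ^ 2 * B) = -(n * u n ^ 2) * B := by ring
    rw [this, hu2, hB]; field_simp
  rw [hE]
  have hw : ‖(1 / (q:ℂ)) * ∑ j, Complex.exp ((u n * d j : ℝ) * Complex.I)‖ ≤ 1 := by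
    rw [norm_mul, norm_div, norm_one, Complex.norm_natCast]
    have : ‖∑ j, Complex.exp ((u n * d j : ℝ) * Complex.I)‖ ≤ q := by
      refine (norm_sum_le _ _).trans ?_
      simp only [Complex.norm_exp_ofReal_mul_I]
      simp
    calc 1 / (q:ℝ) * _ ≤ 1 / (q:ℝ) * q := by gcongr
      _ = 1 := by field_simp
  have he : ‖((Real.exp (-(u n ^ 2 * B)) : ℝ) : ℂ)‖ ≤ 1 := by
    rw [Complex.norm_real, Real.norm_of_nonneg (Real.exp_pos _).le]
    exact Real.exp_le_one_iff.2 (by have := mul_nonneg (sq_nonneg (u n)) hB0; linarith)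
  refine (norm_pow_sub_pow_le' hw he n).trans ?_
  have c1 : ‖(1 / (q:ℂ)) * ∑ j, Complex.exp ((u n * d j : ℝ) * Complex.I) - ((1 - u n ^ 2 * B : ℝ) : ℂ)‖
      ≤ u n ^ 3 * A := by
    have e : ((1 - u n ^ 2 * B : ℝ) : ℂ) = (1 / (q:ℂ)) * ∑ j, (1 + (u n * d j : ℝ) * Complex.I +
        ((u n * d j : ℝ) * Complex.I) ^ 2 / 2) := by
      rw [Finset.sum_add_distrib, Finset.sum_add_distrib, ← Finset.sum_mul, ← Complex.ofReal_sum,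
        ← Finset.mul_sum, hd]
      simp only [mul_pow, Complex.I_sq]
      rw [← Finset.sum_div, ← Finset.sum_mul]
      simp only [Complex.ofReal_mul, mul_pow]
      rw [← Finset.mul_sum, hB]
      simp
      field_simp
      ring
    rw [e, ← mul_sub, ← Finset.sum_sub_distrib, norm_mul, norm_div, norm_one, Complex.norm_natCast, hA]
    rw [mul_left_comm]
    gcongr
    rw [Finset.mul_sum]
    refine (norm_sum_le _ _).trans (Finset.sum_le_sum fun j _ => ?_)
    have hnrm : ‖((u n * d j : ℝ) : ℂ) * Complex.I‖ = u n * |d j| := by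
      simp [abs_of_nonneg hun]
    refine (exp_third ?_).trans (le_of_eq ?_)
    · rw [hnrm, ← abs_of_nonneg hun, ← abs_mul]; exact hs j
    · rw [hnrm]; ring
  have c2 : ‖((1 - u n ^ 2 * B : ℝ) : ℂ) - ((Real.exp (-(u n ^ 2 * B)) : ℝ) : ℂ)‖ ≤ u n ^ 4 * B ^ 2 := by
    rw [← Complex.ofReal_sub, Complex.norm_real, norm_sub_rev]
    have hp := mul_nonneg (sq_nonneg (u n)) hB0
    have := Real.norm_exp_sub_one_sub_id_le (x := -(u n ^ 2 * B)) (by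
      rw [norm_neg, Real.norm_of_nonneg hp]; exact hs2)
    rw [norm_neg, Real.norm_of_nonneg hp] at this
    convert this using 1
    · congr 1; ring
    · ring
  have c3 := norm_sub_le_norm_sub_add_norm_sub ((1 / (q:ℂ)) * ∑ j, Complex.exp ((u n * d j : ℝ) * Complex.I))
    ((1 - u n ^ 2 * B : ℝ) : ℂ) ((Real.exp (-(u n ^ 2 * B)) : ℝ) : ℂ)
  have hA0 : 0 ≤ A := by positivity
  calc _ ≤ n * (u n ^ 3 * A + u n ^ 4 * B ^ 2) := by gcongr; linarith
    _ = (n * u n ^ 2) * (u n * A + u n ^ 2 * B ^ 2) := by ring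
    _ = (2 * t n * q) * (u n * A + u n ^ 2 * B ^ 2) := by rw [hu2]
    _ ≤ _ := by gcongr; exact hn.2


lemma gauss1 {s : ℝ} (hs : 0 < 1 + 2 * s) (b : ℝ) :
    ∫ x, Real.exp (-s * x ^ 2 + b * x) ∂(gaussianReal 0 1)
      = (Real.sqrt (1 + 2 * s))⁻¹ * Real.exp (b ^ 2 / (2 * (1 + 2 * s))) := by
  rw [integral_gaussianReal_eq_integral_smul one_ne_zero]
  set p : ℝ := (1 + 2 * s) / 2 with hp
  have hp0 : 0 < p := by positivity
  have e : ∀ x : ℝ, gaussianPDFReal 0 1 x • Real.exp (-s * x ^ 2 + b * x) =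
      ((Real.sqrt (2 * Real.pi))⁻¹ * Real.exp (b ^ 2 / (2 * (1 + 2 * s)))) *
        Real.exp (-p * (x - b / (2 * p)) ^ 2) := by
    intro x
    simp only [gaussianPDFReal, smul_eq_mul, NNReal.coe_one, mul_one, sub_zero]
    rw [mul_assoc, mul_assoc, ← Real.exp_add, ← Real.exp_add]
    congr 2
    rw [hp]; field_simp; ring
  simp_rw [e]
  rw [integral_const_mul, integral_sub_right_eq_self (fun x => Real.exp (-p * x ^ 2)),
    integral_gaussian]
  have : Real.pi / p = (2 * Real.pi) / (1 + 2 * s) := by rw [hp]; field_simp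
  rw [this, Real.sqrt_div (by positivity)]
  have h1 : Real.sqrt (2 * Real.pi) ≠ 0 := by positivity
  field_simp

lemma gauss1_int {s : ℝ} (hs : 0 < 1 + 2 * s) (b : ℝ) :
    Integrable (fun x => Real.exp (-s * x ^ 2 + b * x)) (gaussianReal 0 1) := by
  by_contra H
  have := gauss1 hs b
  rw [integral_undef H] at this
  have h2 : 0 < (Real.sqrt (1 + 2 * s))⁻¹ * Real.exp (b ^ 2 / (2 * (1 + 2 * s))) := by positivity
  linarith

lemma gaussq {q : ℕ} (hq : 0 < q) {s : ℝ} (hs : 0 ≤ s) :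
    ∫ g : Fin q → ℝ, Real.exp (-(s * ∑ j, (g j - (∑ i, g i) / q) ^ 2))
      ∂(Measure.pi fun _ => gaussianReal 0 1) = (1 + 2 * s) ^ (-(((q:ℝ) - 1) / 2)) := by
  have hq' : (0:ℝ) < q := by exact_mod_cast hq
  have hs1 : 0 < 1 + 2 * s := by positivity
  set L : ℝ := Real.sqrt (2 * s / q) with hL
  have hL2 : L ^ 2 = 2 * s / q := Real.sq_sqrt (by positivity)
  set G : Measure (Fin q → ℝ) := Measure.pi fun _ => gaussianReal 0 1
  let F : (Fin q → ℝ) → ℝ → ℝ := fun g h => Real.exp (∑ j, (-s * g j ^ 2 + (L * h) * g j))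
  have hF : ∀ h, (fun g => F g h) = fun g => ∏ j, Real.exp (-s * g j ^ 2 + (L * h) * g j) := by
    intro h; ext g; simp only [F, Real.exp_sum]
  have hFint : ∀ h, Integrable (fun g => F g h) G := by
    intro h; rw [hF]
    exact Integrable.fintype_prod (f := fun (_ : Fin q) x => Real.exp (-s * x ^ 2 + (L * h) * x))
      fun _ => gauss1_int hs1 _
  have hFval : ∀ h, ∫ g, F g h ∂G = (Real.sqrt (1 + 2 * s))⁻¹ ^ q *
      Real.exp (-(-(s / (1 + 2 * s))) * h ^ 2 + 0 * h) := by
    intro h; rw [hF]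
    rw [integral_fintype_prod_eq_prod (f := fun (_ : Fin q) x => Real.exp (-s * x ^ 2 + (L * h) * x))]
    simp only [gauss1 hs1, Finset.prod_const, Finset.card_univ, Fintype.card_fin]
    rw [mul_pow, ← Real.exp_nat_mul, mul_pow, hL2]
    congr 2
    field_simp
    ring
  have hs2 : 1 + 2 * (-(s / (1 + 2 * s))) = (1 + 2 * s)⁻¹ := by field_simp; ring
  have hs2' : 0 < 1 + 2 * (-(s / (1 + 2 * s))) := by rw [hs2]; positivity
  have hFi : Integrable (Function.uncurry F) (G.prod (gaussianReal 0 1)) := by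
    rw [integrable_prod_iff']
    · refine ⟨Eventually.of_forall hFint, ?_⟩
      have : (fun y => ∫ x, ‖Function.uncurry F (x, y)‖ ∂G) = fun h => (Real.sqrt (1 + 2 * s))⁻¹ ^ q *
          Real.exp (-(-(s / (1 + 2 * s))) * h ^ 2 + 0 * h) := by
        ext h
        rw [← hFval]
        congr 1; ext g
        simp only [Function.uncurry, F, Real.norm_eq_abs, Real.abs_exp]
      rw [this]
      exact (gauss1_int hs2' 0).const_mul _
    · apply Continuous.aestronglyMeasurable
      simp only [F, Function.uncurry_def]
      fun_prop
  have hin : ∀ g : Fin q → ℝ, Real.exp (-(s * ∑ j, (g j - (∑ i, g i) / q) ^ 2)) =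
      ∫ h, F g h ∂(gaussianReal 0 1) := by
    intro g
    have : ∀ h, F g h = Real.exp (-s * ∑ j, g j ^ 2) * Real.exp (-0 * h ^ 2 + (L * ∑ j, g j) * h) := by
      intro h
      simp only [F]
      rw [← Real.exp_add, Finset.sum_add_distrib, ← Finset.mul_sum, ← Finset.mul_sum]
      congr 1; ring
    simp_rw [this]
    rw [integral_const_mul, gauss1 (by norm_num), mul_zero, add_zero, Real.sqrt_one, inv_one, one_mul,
      ← Real.exp_add, mul_pow, hL2]
    congr 1
    simp only [sub_sq, Finset.sum_add_distrib, Finset.sum_sub_distrib, Finset.sum_const,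
      Finset.card_univ, Fintype.card_fin, nsmul_eq_mul, ← Finset.sum_mul, ← Finset.mul_sum]
    field_simp
    ring
  simp_rw [hin]
  rw [integral_integral_swap hFi]
  simp_rw [hFval]
  rw [integral_const_mul, gauss1 hs2', hs2]
  simp only [ne_eq, OfNat.ofNat_ne_zero, not_false_eq_true, zero_pow, zero_div, Real.exp_zero, mul_one]
  rw [Real.sqrt_inv, inv_inv, Real.sqrt_eq_rpow, ← Real.rpow_neg hs1.le, ← Real.rpow_natCast,
    ← Real.rpow_mul hs1.le, ← Real.rpow_add hs1]
  congr 1; ring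

/-- number of vertices of colour j -/
noncomputable def NN {q n : ℕ} (c : Fin n → Fin q) (j : Fin q) : ℝ := ∑ v, if c v = j then 1 else 0

lemma NN_sum_mul {q n : ℕ} (c : Fin n → Fin q) (h : Fin q → ℝ) :
    ∑ j, NN c j * h j = ∑ v, h (c v) := by
  simp only [NN, Finset.sum_mul]
  rw [Finset.sum_comm]
  simp

lemma NN_sum {q n : ℕ} (c : Fin n → Fin q) : ∑ j, NN c j = n := by
  simpa using NN_sum_mul c (fun _ => 1)

lemma charlin {q : ℕ} (x : Fin q → ℝ) :
    ∫ g : Fin q → ℝ, Complex.exp ((∑ j, x j * g j : ℝ) * Complex.I) ∂(Measure.pi fun _ => gaussianReal 0 1)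
      = (Real.exp (-(∑ j, x j ^ 2) / 2) : ℂ) := by
  have : ∀ g : Fin q → ℝ, Complex.exp ((∑ j, x j * g j : ℝ) * Complex.I) =
      ∏ j, Complex.exp (x j * g j * Complex.I) := by
    intro g
    rw [← Complex.exp_sum]; push_cast; rw [Finset.sum_mul]
  simp_rw [this]
  rw [integral_fintype_prod_eq_prod (f := fun (j : Fin q) (y : ℝ) => Complex.exp (x j * y * Complex.I))]
  simp_rw [← charFun_apply_real, charFun_gaussianReal]
  rw [← Complex.exp_sum, Complex.ofReal_exp]
  congr 1
  push_cast
  rw [← Finset.sum_neg_distrib, Finset.sum_div]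
  refine Finset.sum_congr rfl fun j _ => ?_
  simp; ring

lemma avg_eq {q n : ℕ} (hq : 0 < q) (hn : 0 < n) {t : ℝ} (ht : 0 ≤ t) :
    ((1 / (q:ℝ) ^ n * ∑ c : Fin n → Fin q, Real.exp (-(t * (q / n) * ∑ j, (NN c j - n / q) ^ 2)) : ℝ) : ℂ)
     = ∫ g : Fin q → ℝ, ((1 / (q:ℂ)) * ∑ j, Complex.exp ((Real.sqrt (2 * t * q / n) *
        (g j - (∑ i, g i) / q) : ℝ) * Complex.I)) ^ n ∂(Measure.pi fun _ => gaussianReal 0 1) := by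
  have hq' : (0:ℝ) < q := by exact_mod_cast hq
  have hn' : (0:ℝ) < n := by exact_mod_cast hn
  set u := Real.sqrt (2 * t * q / n) with hu
  have hu2 : u ^ 2 = 2 * t * q / n := Real.sq_sqrt (by positivity)
  have e1 : ∀ g : Fin q → ℝ, ((1 / (q:ℂ)) * ∑ j, Complex.exp ((u *
        (g j - (∑ i, g i) / q) : ℝ) * Complex.I)) ^ n = (1 / (q:ℂ) ^ n) * ∑ c : Fin n → Fin q,
          Complex.exp ((∑ j, (u * (NN c j - n / q)) * g j : ℝ) * Complex.I) := by
    intro g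
    rw [mul_pow, Fintype.sum_pow, div_pow, one_pow]
    congr 1
    refine Finset.sum_congr rfl fun c _ => ?_
    rw [← Complex.exp_sum, ← Finset.sum_mul, ← Complex.ofReal_sum]
    congr 3
    rw [← NN_sum_mul c (fun j => u * (g j - (∑ i, g i) / q))]
    have : ∀ j, NN c j * (u * (g j - (∑ i, g i) / q)) = u * (NN c j * g j) - NN c j * (u * (∑ i, g i) / q) := by
      intro j; ring
    simp_rw [this]
    have : ∀ j, u * (NN c j - n / q) * g j = u * (NN c j * g j) - (u * n / q) * g j := by
      intro j; ring
    simp_rw [this]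
    rw [Finset.sum_sub_distrib, Finset.sum_sub_distrib, ← Finset.sum_mul, NN_sum, ← Finset.mul_sum, ← Finset.mul_sum]
    ring
  simp_rw [e1]
  rw [integral_const_mul, integral_finsetSum]
  · simp_rw [charlin]
    push_cast
    congr 1
    refine Finset.sum_congr rfl fun c _ => ?_
    congr 1
    simp only [mul_pow]
    rw [← Finset.mul_sum]
    have : (u:ℂ)^2 = 2 * t * q / n := by exact_mod_cast hu2
    rw [this]; ring
  · intro c _
    refine Integrable.of_bound (C := 1) ?_ ?_
    · apply Continuous.aestronglyMeasurable; fun_prop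
    · refine Eventually.of_forall fun g => ?_
      rw [Complex.norm_exp_ofReal_mul_I]

lemma count (q n m : ℕ) :
    (Nat.card {p : (Fin m → Fin n × Fin n) × (Fin n → Fin q) //
      ∀ i : Fin m, p.2 (p.1 i).1 ≠ p.2 (p.1 i).2} : ℝ) =
    ∑ c : Fin n → Fin q, ((n:ℝ) ^ 2 - ∑ j, NN c j ^ 2) ^ m := by
  classical
  rw [Nat.card_eq_fintype_card, Fintype.card_subtype, Finset.card_filter]
  push_cast
  rw [Fintype.sum_prod_type_right]
  refine Finset.sum_congr rfl fun c _ => ?_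
  have e : (n:ℝ) ^ 2 - ∑ j, NN c j ^ 2 = ∑ p : Fin n × Fin n, if c p.1 ≠ c p.2 then (1:ℝ) else 0 := by
    have h1 : ∑ j, NN c j ^ 2 = ∑ v, NN c (c v) := by
      rw [← NN_sum_mul c (NN c)]
      exact Finset.sum_congr rfl fun j _ => sq _
    rw [h1, Fintype.sum_prod_type]
    have h2 : (n:ℝ)^2 = ∑ v : Fin n, (n:ℝ) := by simp [sq]
    rw [h2, ← Finset.sum_sub_distrib]
    refine Finset.sum_congr rfl fun v _ => ?_
    have h3 : (n:ℝ) = ∑ v : Fin n, (1:ℝ) := by simp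
    rw [NN, h3, ← Finset.sum_sub_distrib]
    refine Finset.sum_congr rfl fun w _ => ?_
    by_cases h : c w = c v
    · simp [h]
    · simp [h, Ne.symm h]
  rw [e, Fintype.sum_pow]
  refine Finset.sum_congr rfl fun f _ => ?_
  rw [Finset.prod_ite_zero]
  simp

/-- normalized chi-squared statistic of a coloring -/
def yy {q n : ℕ} (c : Fin n → Fin q) : ℝ := (q / ((q:ℝ) - 1)) * ∑ j, (NN c j / n - 1 / q) ^ 2

lemma one_sub_yy {q n : ℕ} (hq : 2 ≤ q) (hn : 0 < n) (c : Fin n → Fin q) :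
    (1 - 1 / (q:ℝ)) * (1 - yy c) = ((n:ℝ) ^ 2 - ∑ j, NN c j ^ 2) / n ^ 2 := by
  have hq' : (0:ℝ) < (q:ℝ) - 1 := by
    have : (2:ℝ) ≤ q := by exact_mod_cast hq
    linarith
  have hq0 : (0:ℝ) < q := by linarith
  have hn' : (0:ℝ) < n := by exact_mod_cast hn
  have e : ∑ j, (NN c j / n - 1 / q) ^ 2 = (∑ j, NN c j ^ 2) / n ^ 2 - 1 / q := by
    have : ∀ j, (NN c j / n - 1 / q) ^ 2 = NN c j ^ 2 / n ^ 2 - NN c j * (2 / (n * q)) + 1 / q ^ 2 := by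
      intro j; field_simp; ring
    simp_rw [this]
    rw [Finset.sum_add_distrib, Finset.sum_sub_distrib, ← Finset.sum_mul, NN_sum, ← Finset.sum_div]
    simp only [Finset.sum_const, Finset.card_univ, Fintype.card_fin, nsmul_eq_mul]
    field_simp
    ring
  rw [yy, e]
  field_simp
  ring

lemma yy_mem {q n : ℕ} (hq : 2 ≤ q) (hn : 0 < n) (c : Fin n → Fin q) : 0 ≤ yy c ∧ yy c ≤ 1 := by
  have hq2 : (2:ℝ) ≤ q := by exact_mod_cast hq
  have hq' : (0:ℝ) < (q:ℝ) - 1 := by linarith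
  have hq0 : (0:ℝ) < q := by linarith
  have hn' : (0:ℝ) < n := by exact_mod_cast hn
  constructor
  · unfold yy
    have : 0 ≤ ∑ j, (NN c j / n - 1 / q) ^ 2 := Finset.sum_nonneg fun _ _ => sq_nonneg _
    positivity
  · have h := one_sub_yy hq hn c
    have hNN : ∀ j, 0 ≤ NN c j := fun j => Finset.sum_nonneg fun _ _ => by split_ifs <;> norm_num
    have hle : ∀ j, NN c j ≤ n := by
      intro j
      rw [← NN_sum c]
      exact Finset.single_le_sum (fun i _ => hNN i) (Finset.mem_univ j)
    have : ∑ j, NN c j ^ 2 ≤ (n:ℝ) ^ 2 := by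
      calc ∑ j, NN c j ^ 2 ≤ ∑ j, NN c j * n :=
            Finset.sum_le_sum fun j _ => by rw [sq]; exact mul_le_mul_of_nonneg_left (hle j) (hNN j)
        _ = (n:ℝ) ^ 2 := by rw [← Finset.sum_mul, NN_sum, sq]
    have h2 : 0 ≤ (1 - 1 / (q:ℝ)) * (1 - yy c) := by
      rw [h]; apply div_nonneg <;> [linarith; positivity]
    have h3 : 0 < 1 - 1 / (q:ℝ) := by
      rw [sub_pos, div_lt_one hq0]; linarith
    have := nonneg_of_mul_nonneg_right h2 h3
    linarith

lemma PProper_eq {q n : ℕ} (hq : 2 ≤ q) (hn : 0 < n) (m : ℕ) :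
    PProper q n m = (1 - 1 / (q:ℝ)) ^ m * (1 / (q:ℝ) ^ n * ∑ c : Fin n → Fin q, (1 - yy c) ^ m) := by
  have hn' : (0:ℝ) < n := by exact_mod_cast hn
  rw [PProper, count, mul_left_comm, Finset.mul_sum, div_eq_mul_inv, mul_comm, mul_inv, mul_comm _ ((q:ℝ)^n)⁻¹,
    mul_assoc, one_div ((q:ℝ)^n)]
  congr 1
  rw [Finset.mul_sum]
  refine Finset.sum_congr rfl fun c _ => ?_
  rw [← mul_pow, one_sub_yy hq hn, div_pow, ← pow_mul, div_eq_inv_mul]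

lemma approx {q n m : ℕ} (hq : 2 ≤ q) (hn : 0 < n) (hm : 0 < m) :
    |1 / (q:ℝ) ^ n * ∑ c : Fin n → Fin q, (1 - yy c) ^ m -
      1 / (q:ℝ) ^ n * ∑ c : Fin n → Fin q,
        Real.exp (-((m / n / ((q:ℝ) - 1)) * (q / n) * ∑ j, (NN c j - n / q) ^ 2))| ≤ 6 / m := by
  have hq2 : (2:ℝ) ≤ q := by exact_mod_cast hq
  have hq' : (0:ℝ) < (q:ℝ) - 1 := by linarith
  have hq0 : (0:ℝ) < q := by linarith
  have hn' : (0:ℝ) < n := by exact_mod_cast hn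
  have e : ∀ c : Fin n → Fin q, (m / n / ((q:ℝ) - 1)) * (q / n) * ∑ j, (NN c j - n / q) ^ 2 = m * yy c := by
    intro c
    rw [yy, Finset.mul_sum, Finset.mul_sum, Finset.mul_sum]
    refine Finset.sum_congr rfl fun j _ => ?_
    field_simp
  simp_rw [e]
  rw [← mul_sub, ← Finset.sum_sub_distrib, abs_mul, abs_of_pos (by positivity)]
  have : |∑ c : Fin n → Fin q, ((1 - yy c) ^ m - Real.exp (-(m * yy c)))| ≤ q ^ n * (6 / m) := by
    refine (Finset.abs_sum_le_sum_abs _ _).trans ?_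
    refine (Finset.sum_le_sum fun c _ => elem_bound (yy_mem hq hn c).1 (yy_mem hq hn c).2 hm).trans ?_
    simp
  calc _ ≤ 1 / (q:ℝ) ^ n * (q ^ n * (6 / m)) := by gcongr
    _ = _ := by field_simp

lemma gauss_limit {q : ℕ} (hq : 0 < q) (t : ℕ → ℝ) (T : ℝ)
    (ht : ∀ᶠ n in atTop, 0 ≤ t n ∧ t n ≤ T) :
    Tendsto (fun n : ℕ => 1 / (q:ℝ) ^ n * ∑ c : Fin n → Fin q,
        Real.exp (-(t n * (q / n) * ∑ j, (NN c j - n / q) ^ 2))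
          - (1 + 2 * t n) ^ (-(((q:ℝ) - 1) / 2))) atTop (𝓝 0) := by
  have hq0 : (0:ℝ) < q := by exact_mod_cast hq
  set G : Measure (Fin q → ℝ) := Measure.pi fun _ => gaussianReal 0 1 with hG
  let W : ℕ → (Fin q → ℝ) → ℂ := fun n g =>
    ((1 / (q:ℂ)) * ∑ j, Complex.exp ((Real.sqrt (2 * t n * q / n) *
        (g j - (∑ i, g i) / q) : ℝ) * Complex.I)) ^ n
  let V : ℕ → (Fin q → ℝ) → ℂ := fun n g =>
    (Real.exp (-(t n * ∑ j, (g j - (∑ i, g i) / q) ^ 2)) : ℂ)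
  have hWm : ∀ n, AEStronglyMeasurable (W n) G := fun n => by
    apply Continuous.aestronglyMeasurable
    simp only [W]; fun_prop
  have hVm : ∀ n, AEStronglyMeasurable (V n) G := fun n => by
    apply Continuous.aestronglyMeasurable
    simp only [V]; fun_prop
  have hWb : ∀ n g, ‖W n g‖ ≤ 1 := by
    intro n g
    simp only [W]
    rw [norm_pow]
    apply pow_le_one₀ (norm_nonneg _)
    rw [norm_mul, norm_div, norm_one, Complex.norm_natCast]
    have : ‖∑ j, Complex.exp ((Real.sqrt (2 * t n * q / n) *
        (g j - (∑ i, g i) / q) : ℝ) * Complex.I)‖ ≤ q := by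
      refine (norm_sum_le _ _).trans ?_
      simp only [Complex.norm_exp_ofReal_mul_I]
      simp
    calc 1 / (q:ℝ) * _ ≤ 1 / (q:ℝ) * q := by gcongr
      _ = 1 := by field_simp
  have hVb : ∀ n, 0 ≤ t n → ∀ g, ‖V n g‖ ≤ 1 := by
    intro n h g
    simp only [V]
    rw [Complex.norm_real, Real.norm_of_nonneg (Real.exp_pos _).le]
    apply Real.exp_le_one_iff.2
    have : 0 ≤ ∑ j, (g j - (∑ i, g i) / q) ^ 2 := Finset.sum_nonneg fun _ _ => sq_nonneg _
    have := mul_nonneg h this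
    linarith
  have hdct : Tendsto (fun n => ∫ g, (W n g - V n g) ∂G) atTop (𝓝 (∫ _, (0:ℂ) ∂G)) := by
    refine tendsto_integral_filter_of_dominated_convergence (fun _ => 2)
      (Eventually.of_forall fun n => (hWm n).sub (hVm n)) ?_ (integrable_const _) ?_
    · filter_upwards [ht] with n hn
      refine Eventually.of_forall fun g => ?_
      refine (norm_sub_le _ _).trans ?_
      linarith [hWb n g, hVb n hn.1 g]
    · refine Eventually.of_forall fun g => ?_
      refine pointwise hq (fun j => g j - (∑ i, g i) / q) ?_ t T ht
      rw [Finset.sum_sub_distrib]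
      simp
      field_simp
      simp
  rw [integral_zero] at hdct
  have hre := (Complex.continuous_re.tendsto 0).comp hdct
  rw [Complex.zero_re] at hre
  refine hre.congr' ?_
  filter_upwards [ht, eventually_gt_atTop 0] with n hn hn0
  simp only [Function.comp]
  rw [integral_sub (Integrable.of_bound (hWm n) 1 (Eventually.of_forall (hWb n)))
    (Integrable.of_bound (hVm n) 1 (Eventually.of_forall (hVb n hn.1)))]
  have h1 := avg_eq hq hn0 hn.1
  have h2 : ∫ g, V n g ∂G = (((1 + 2 * t n) ^ (-(((q:ℝ) - 1) / 2)) : ℝ) : ℂ) := by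
    rw [← gaussq hq hn.1]
    simp only [V]
    exact integral_ofReal
  rw [h2, ← h1, ← Complex.ofReal_sub, Complex.ofReal_re]

end Helpers

/-- Wright's asymptotics for the probability that a random
`q`-coloring of a random multigraph is proper, in the subcritical regime. -/
theorem prob_proper_coloring (q : ℕ) (hq : 2 ≤ q) (m : ℕ → ℕ)
    (hm : ∃ a b : ℝ, 0 < a ∧ a ≤ b ∧ b < 1 / 2 ∧
      ∀ᶠ n : ℕ in Filter.atTop, a ≤ (m n : ℝ) / n ∧ (m n : ℝ) / n ≤ b) :
    Filter.Tendsto (fun n : ℕ =>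
        PProper q n (m n) /
          ((1 - 1 / (q : ℝ)) ^ m n *
            (1 + (2 * (m n : ℝ) / n) / ((q : ℝ) - 1)) ^ (-(((q : ℝ) - 1) / 2))))
      Filter.atTop (nhds 1) := by
  obtain ⟨a, b, ha, hab, hb, hev⟩ := hm
  have hq2 : (2:ℝ) ≤ q := by exact_mod_cast hq
  have hq' : (0:ℝ) < (q:ℝ) - 1 := by linarith
  have hq0 : (0:ℝ) < q := by linarith
  set t : ℕ → ℝ := fun n => (m n : ℝ) / n / ((q:ℝ) - 1) with ht
  set r : ℝ := -(((q:ℝ) - 1) / 2) with hr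
  have hr0 : r ≤ 0 := by rw [hr]; linarith
  set T : ℝ := b / ((q:ℝ) - 1) with hT
  have htb : ∀ᶠ n in Filter.atTop, 0 ≤ t n ∧ t n ≤ T := by
    filter_upwards [hev] with n hn
    refine ⟨by positivity, ?_⟩
    simp only [ht, hT]
    gcongr
    exact hn.2
  have hT0 : 0 < T := by have : 0 < b := by linarith
                         positivity
  have h1 := gauss_limit (by omega : 0 < q) t T htb
  set E : ℕ → ℝ := fun n => 1 / (q:ℝ) ^ n * ∑ c : Fin n → Fin q, (1 - yy c) ^ m n with hE
  have h2 : Filter.Tendsto (fun n => E n - 1 / (q:ℝ) ^ n * ∑ c : Fin n → Fin q,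
        Real.exp (-(t n * (q / n) * ∑ j, (NN c j - n / q) ^ 2))) Filter.atTop (nhds 0) := by
    refine squeeze_zero_norm' ?_ (tendsto_const_div_atTop_nhds_zero_nat (6 / a))
    filter_upwards [hev, Filter.eventually_gt_atTop 0] with n hn hn0
    have hn' : (0:ℝ) < n := by exact_mod_cast hn0
    have hm1 : a * n ≤ m n := (le_div_iff₀ hn').1 hn.1
    have hm0 : (0:ℝ) < m n := lt_of_lt_of_le (by positivity) hm1
    refine (approx hq hn0 (by exact_mod_cast hm0)).trans ?_
    rw [div_div]
    gcongr
  have h3 : Filter.Tendsto (fun n => E n - (1 + 2 * t n) ^ r) Filter.atTop (nhds 0) := by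
    have := h2.add h1
    simpa using this
  have hD : 0 < (1 + 2 * T) ^ r := by positivity
  have h4 : Filter.Tendsto (fun n => (E n - (1 + 2 * t n) ^ r) / (1 + 2 * t n) ^ r)
      Filter.atTop (nhds 0) := by
    have hl : Filter.Tendsto (fun n => |E n - (1 + 2 * t n) ^ r| / (1 + 2 * T) ^ r)
        Filter.atTop (nhds 0) := by simpa using h3.abs.div_const ((1 + 2 * T) ^ r)
    refine squeeze_zero_norm' ?_ hl
    filter_upwards [htb] with n hn
    have hp : 0 < 1 + 2 * t n := by linarith [hn.1]
    rw [norm_div, Real.norm_eq_abs, Real.norm_of_nonneg (by positivity)]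
    exact div_le_div_of_nonneg_left (abs_nonneg _) hD
      (Real.rpow_le_rpow_of_nonpos hp (by linarith [hn.2]) hr0)
  have h5 := h4.const_add 1
  rw [add_zero] at h5
  refine h5.congr' ?_
  filter_upwards [htb, Filter.eventually_gt_atTop 0] with n hn hn0
  have hp : 0 < 1 + 2 * t n := by linarith [hn.1]
  have hpr : 0 < (1 + 2 * t n) ^ r := by positivity
  have hx : 1 + (2 * (m n : ℝ) / n) / ((q : ℝ) - 1) = 1 + 2 * t n := by
    simp only [ht]; ring
  have h6 : 0 < 1 - 1 / (q:ℝ) := by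
    rw [sub_pos, div_lt_one hq0]; linarith
  rw [PProper_eq hq hn0, hx, mul_div_mul_left _ _ (by positivity)]
  change _ = E n / (1 + 2 * t n) ^ r
  rw [sub_div, div_self hpr.ne']
  ring

end

end Inhomog
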